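/- Let f_1,…,f_n : ℝ^d → ℝ be three times continuously differentiable, let x ∈ ℝ^d, and let ρ, M, K ≥ 0 satisfy ‖∇f_i(y)‖ ≤ M and ‖D³f_i(y)‖ ≤ K for every index i and every y in the closed ball of radius ρM around x. Let γ consist of b indices drawn independently and uniformly at random from {1,…,n} and ∇f_γ = (1/b)∑_{j=1}^b ∇f_{i_j}. Then the expected mini-batch USAM update direction satisfies ‖E[∇f_γ(x + ρ∇f_γ(x))] − ∇f(x) − ρ·∇((1/2)‖∇f‖² + (1/(2b)) tr V)(x)‖ ≤ (K M²/2)ρ². -/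

import Mathlib

/-!
Write `g i` for the gradient of `f i`.  Each `g i` is `C²` and `‖D²(g i)‖ = ‖D³(f i)‖ ≤ K` on the
ball, so Taylor's formula with step `ρ • ∇F_γ(x)`, of norm at most `ρ M`, gives
`g i (x + ρ∇F_γ(x)) = g i x + ρ D(g i)(x) ∇F_γ(x) + R` with `‖R‖ ≤ K M² ρ² / 2`
(`gradient_taylor`).  Averaging over the batch and over all batches preserves the bound on `R`,
so it remains to identify the expected zeroth and first order terms.  The former is `∇F(x)`.
The latter is the expectation of the average over `j, k` of `D(g (γ j))(x) (g (γ k) x)`: the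
diagonal pairs contribute `(1/b) · avg_i D(g i)(x) (g i x)`, and by independence the others
contribute `(1 - 1/b) · D(∇F)(x) ∇F(x)` (`mean_mean_pair`).  As Hessians are symmetric,
`D(∇h) ∇h` is the gradient of `½‖∇h‖²` (`hasGradientAt_norm_gradient_sq`), which turns this
expression into the gradient of the regularizer.
-/


open Finset

section Mean

variable {ι κ β E : Type*} [Fintype ι] [Fintype κ] [Fintype β]
  [NormedAddCommGroup E] [NormedSpace ℝ E]

/-- The uniform average of a finite family of vectors, as a linear map in the family
(it is `0` on an empty family). -/
noncomputable def mean : (ι → E) →ₗ[ℝ] E where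
  toFun φ := (Fintype.card ι : ℝ)⁻¹ • ∑ i, φ i
  map_add' φ ψ := by simp [Finset.sum_add_distrib]
  map_smul' c φ := by simp [← Finset.smul_sum, smul_comm c]

lemma mean_def (φ : ι → E) : mean φ = (Fintype.card ι : ℝ)⁻¹ • ∑ i, φ i := rfl

lemma mean_add' (φ ψ : ι → E) : mean (fun i => φ i + ψ i) = mean φ + mean ψ :=
  map_add mean φ ψ

lemma mean_sub' (φ ψ : ι → E) : mean (fun i => φ i - ψ i) = mean φ - mean ψ :=
  map_sub mean φ ψ

lemma mean_smul' (c : ℝ) (φ : ι → E) : mean (fun i => c • φ i) = c • mean φ :=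
  map_smul mean c φ

lemma mean_const [Nonempty ι] (e : E) : mean (fun _ : ι => e) = e := by
  have : (Fintype.card ι : ℝ) ≠ 0 := by positivity
  simp [mean_def, ← Nat.cast_smul_eq_nsmul ℝ, smul_smul, this]

lemma map_mean {E' : Type*} [NormedAddCommGroup E'] [NormedSpace ℝ E'] (L : E →L[ℝ] E')
    (φ : ι → E) : L (mean φ) = mean (fun i => L (φ i)) := by
  simp [mean_def, map_sum]

lemma mean_apply {E' : Type*} [NormedAddCommGroup E'] [NormedSpace ℝ E'] (L : ι → E →L[ℝ] E')
    (e : E) : (mean L) e = mean (fun i => L i e) := by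
  simp [mean_def]

lemma norm_mean_le [Nonempty ι] {C : ℝ} (φ : ι → E) (h : ∀ i, ‖φ i‖ ≤ C) : ‖mean φ‖ ≤ C := by
  have hc : (0 : ℝ) < Fintype.card ι := by positivity
  rw [mean_def, norm_smul, norm_inv, Real.norm_natCast, inv_mul_le_iff₀ hc]
  refine (norm_sum_le _ _).trans ((Finset.sum_le_sum fun i _ => h i).trans ?_)
  simp

lemma mean_comm (φ : ι → κ → E) :
    mean (fun i => mean (φ i)) = mean (fun k => mean (fun i => φ i k)) := by
  simp only [mean_def, ← Finset.smul_sum]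
  rw [smul_comm, Finset.sum_comm]

lemma mean_equiv (e : ι ≃ κ) (φ : κ → E) : mean (fun i => φ (e i)) = mean φ := by
  rw [mean_def, mean_def, Fintype.card_congr e, e.sum_comp]

lemma mean_prod (φ : ι × κ → E) : mean φ = mean (fun i => mean (fun k => φ (i, k))) := by
  simp only [mean_def, ← Finset.smul_sum, smul_smul, Fintype.sum_prod_type, Fintype.card_prod]
  push_cast
  rw [mul_inv]

variable [DecidableEq ι] [Nonempty β]

/-- Each entry of a uniform random tuple is uniform. -/
lemma mean_coord (j : ι) (φ : β → E) : mean (fun γ : ι → β => φ (γ j)) = mean φ := by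
  have h := mean_equiv (Equiv.funSplitAt j β) (fun p => φ p.1)
  simp only [Equiv.funSplitAt_apply] at h
  rw [h, mean_prod]
  simp only [mean_const]

/-- Two distinct entries of a uniform random tuple are independent and uniform. -/
lemma mean_pair {j k : ι} (hjk : j ≠ k) (h : β → β → E) :
    mean (fun γ : ι → β => h (γ j) (γ k)) = mean (fun i => mean (h i)) := by
  have e := mean_equiv (Equiv.funSplitAt j β) (fun p => h p.1 (p.2 ⟨k, hjk.symm⟩))
  simp only [Equiv.funSplitAt_apply] at e
  rw [e, mean_prod]
  simp only [mean_coord]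

/-- The expectation of a double average over the entries of a uniform random tuple: a fraction
`1 / card ι` of the pairs of positions is diagonal, the other pairs are independent. -/
lemma mean_mean_pair [Nonempty ι] (h : β → β → E) :
    mean (fun γ : ι → β => mean (fun j => mean (fun k => h (γ j) (γ k)))) =
      (Fintype.card ι : ℝ)⁻¹ • mean (fun i => h i i)
        + (1 - (Fintype.card ι : ℝ)⁻¹) • mean (fun i => mean (h i)) := by
  rw [mean_comm]
  have key : ∀ j : ι, mean (fun γ : ι → β => mean (fun k => h (γ j) (γ k))) =
      (Fintype.card ι : ℝ)⁻¹ • mean (fun i => h i i)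
        + (1 - (Fintype.card ι : ℝ)⁻¹) • mean (fun i => mean (h i)) := by
    intro j
    rw [mean_comm]
    have hk : (fun k : ι => mean (fun γ : ι → β => h (γ j) (γ k))) = fun k =>
        (if k = j then mean (fun i => h i i) - mean (fun i => mean (h i)) else 0)
          + mean (fun i => mean (h i)) := by
      funext k
      split_ifs with hkj
      · subst hkj
        rw [mean_coord k (fun i => h i i), sub_add_cancel]
      · rw [mean_pair (Ne.symm hkj), zero_add]
    rw [hk, mean_add', mean_const, mean_def, Finset.sum_ite_eq']
    simp only [Finset.mem_univ, if_true]
    module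
  simp only [key, mean_const]

end Mean

section Gradient

variable {E : Type*} [NormedAddCommGroup E] [InnerProductSpace ℝ E] [CompleteSpace E]

/-- The Riesz isomorphism from the dual to the space, over `ℝ` (so linear rather than
conjugate-linear). -/
noncomputable def riesz : (StrongDual ℝ E) ≃ₗᵢ[ℝ] E := (InnerProductSpace.toDual ℝ E).symm

lemma gradient_eq_riesz_comp (f : E → ℝ) : gradient f = riesz ∘ fderiv ℝ f := rfl

lemma contDiff_gradient {f : E → ℝ} (hf : ContDiff ℝ 3 f) : ContDiff ℝ 2 (gradient f) := by
  rw [gradient_eq_riesz_comp]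
  exact riesz.contDiff.comp (hf.fderiv_right (by norm_num))

lemma norm_fderiv_fderiv_gradient (f : E → ℝ) (y : E) :
    ‖fderiv ℝ (fderiv ℝ (gradient f)) y‖ = ‖iteratedFDeriv ℝ 3 f y‖ := by
  rw [← norm_iteratedFDeriv_one, norm_iteratedFDeriv_fderiv, gradient_eq_riesz_comp,
    LinearIsometryEquiv.norm_iteratedFDeriv_comp_left, norm_iteratedFDeriv_fderiv]

/-- The derivative of the gradient represents the second derivative through the inner product. -/
lemma inner_fderiv_gradient {f : E → ℝ} (hf : ContDiff ℝ 3 f) (x u w : E) :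
    inner ℝ (fderiv ℝ (gradient f) x u) w = fderiv ℝ (fderiv ℝ f) x u w := by
  let A : E →L[ℝ] StrongDual ℝ E := (riesz (E := E)).symm.toContinuousLinearEquiv
  have e : fderiv ℝ f = A ∘ gradient f := toDual_comp_gradient.symm
  have h : fderiv ℝ (fderiv ℝ f) x = A ∘L fderiv ℝ (gradient f) x := by
    rw [e]
    exact (A.hasFDerivAt.comp x
      (((contDiff_gradient hf).differentiable (by norm_num)) x).hasFDerivAt).fderiv
  rw [h]
  rfl

lemma inner_fderiv_gradient_comm {f : E → ℝ} (hf : ContDiff ℝ 3 f) (x u w : E) :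
    inner ℝ (fderiv ℝ (gradient f) x u) w = inner ℝ u (fderiv ℝ (gradient f) x w) := by
  rw [real_inner_comm _ u, inner_fderiv_gradient hf, inner_fderiv_gradient hf]
  exact hf.contDiffAt.isSymmSndFDerivAt (by simp; norm_num) u w

/-- By symmetry of the Hessian, the gradient of `‖∇f‖²` is `2 D(∇f) ∇f`. -/
lemma hasGradientAt_norm_gradient_sq {f : E → ℝ} (hf : ContDiff ℝ 3 f) (x : E) :
    HasGradientAt (fun y => ‖gradient f y‖ ^ 2)
      ((2 : ℝ) • fderiv ℝ (gradient f) x (gradient f x)) x := by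
  rw [hasGradientAt_iff_hasFDerivAt]
  have h := (((contDiff_gradient hf).differentiable (by norm_num)) x).hasFDerivAt.norm_sq
  refine h.congr_fderiv ?_
  ext w
  simp [inner_fderiv_gradient_comm hf]

lemma gradient_mean {ι : Type*} [Fintype ι] {f : ι → E → ℝ}
    (hf : ∀ i, Differentiable ℝ (f i)) :
    gradient (fun y => mean (fun i => f i y)) = fun y => mean (fun i => gradient (f i) y) := by
  funext x
  have h : fderiv ℝ (fun y => mean (fun i => f i y)) x = mean (fun i => fderiv ℝ (f i) x) := by
    simp only [mean_def]
    exact ((HasFDerivAt.fun_sum fun i _ => (hf i x).hasFDerivAt).const_smul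
      (Fintype.card ι : ℝ)⁻¹).fderiv
  rw [gradient_eq_riesz_comp, Function.comp_apply, h]
  exact map_mean riesz.toContinuousLinearEquiv.toContinuousLinearMap _

/-- Second-order Taylor estimate with remainder `½ K ‖v‖²`, for a map whose second derivative is
bounded by `K` on a convex set containing the segment. -/
lemma taylor_two {g : E → E} (hg : ContDiff ℝ 2 g) {s : Set E} (hs : Convex ℝ s) {K : ℝ}
    (hK : ∀ y ∈ s, ‖fderiv ℝ (fderiv ℝ g) y‖ ≤ K) {x v : E} (hx : x ∈ s) (hxv : x + v ∈ s) :
    ‖g (x + v) - g x - fderiv ℝ g x v‖ ≤ K / 2 * ‖v‖ ^ 2 := by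
  have hg1 : Differentiable ℝ g := hg.differentiable (by norm_num)
  have hg2 : Differentiable ℝ (fderiv ℝ g) :=
    (hg.fderiv_right (m := 1) (by norm_num)).differentiable (by norm_num)
  have hmem : ∀ t ∈ Set.Icc (0 : ℝ) 1, x + t • v ∈ s := fun t ht =>
    hs.add_smul_mem hx hxv ht
  have hder : ∀ t : ℝ, HasDerivAt (fun t : ℝ => g (x + t • v) - g x - t • fderiv ℝ g x v)
      (fderiv ℝ g (x + t • v) v - fderiv ℝ g x v) t := by
    intro t
    have h1 : HasDerivAt (fun t : ℝ => x + t • v) v t := by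
      simpa using ((hasDerivAt_id t).smul_const v).const_add x
    have h2 := (hg1 (x + t • v)).hasFDerivAt.comp_hasDerivAt t h1
    have h3 : HasDerivAt (fun t : ℝ => t • fderiv ℝ g x v) (fderiv ℝ g x v) t := by
      simpa using (hasDerivAt_id t).smul_const (fderiv ℝ g x v)
    exact (h2.sub_const (g x)).sub h3
  have h := image_norm_le_of_norm_deriv_right_le_deriv_boundary (a := 0) (b := 1)
    (B := fun t => K / 2 * ‖v‖ ^ 2 * t ^ 2) (B' := fun t => K * ‖v‖ ^ 2 * t)
    (fun t _ => (hder t).continuousAt.continuousWithinAt)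
    (fun t _ => (hder t).hasDerivWithinAt) (by simp)
    (fun t => by
      refine ((hasDerivAt_pow 2 t).const_mul (K / 2 * ‖v‖ ^ 2)).congr_deriv ?_
      push_cast
      ring)
    (fun t ht => by
      have hle := hs.norm_image_sub_le_of_norm_fderiv_le (fun y _ => hg2 y) hK hx
        (hmem t ⟨ht.1, ht.2.le⟩)
      rw [add_sub_cancel_left, norm_smul, Real.norm_of_nonneg ht.1] at hle
      rw [← sub_apply]
      calc _ ≤ ‖fderiv ℝ g (x + t • v) - fderiv ℝ g x‖ * ‖v‖ :=
            ContinuousLinearMap.le_opNorm _ _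
        _ ≤ K * (t * ‖v‖) * ‖v‖ := by gcongr
        _ = K * ‖v‖ ^ 2 * t := by ring)
    (Set.right_mem_Icc.2 zero_le_one)
  simpa using h

lemma gradient_taylor {f : E → ℝ} (hf : ContDiff ℝ 3 f) {x v : E} {r K : ℝ} (hv : ‖v‖ ≤ r)
    (hK : ∀ y ∈ Metric.closedBall x r, ‖iteratedFDeriv ℝ 3 f y‖ ≤ K) :
    ‖gradient f (x + v) - gradient f x - fderiv ℝ (gradient f) x v‖ ≤ K / 2 * ‖v‖ ^ 2 := by
  refine taylor_two (contDiff_gradient hf) (convex_closedBall x r)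
    (fun y hy => (norm_fderiv_fderiv_gradient f y).trans_le (hK y hy)) ?_ ?_
  · exact Metric.mem_closedBall_self ((norm_nonneg v).trans hv)
  · simpa using hv

end Gradient

/-- **mini-batch USAM drift expansion bound.**
Let `f₁, …, fₙ : ℝ^d → ℝ` be `C³`, and suppose `‖∇fᵢ(y)‖ ≤ M` and `‖D³fᵢ(y)‖ ≤ K` for every
`i` and every `y` in the closed ball of radius `ρM` around `x`.  Let `γ` consist of `b`
indices drawn independently and uniformly from `{1, …, n}` (expectation = average over all
`n^b` tuples `γ : Fin b → Fin n`), with mini-batch loss `f_γ = (1/b) ∑ⱼ f_{γⱼ}` and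
full-batch loss `F = (1/n) ∑ᵢ fᵢ`.  Then
`‖E[∇f_γ(x + ρ∇f_γ(x))] − ∇F(x) − ρ∇((1/2)‖∇F‖² + (1/(2b)) tr V)(x)‖ ≤ (K M²/2) ρ²`,
where `tr V(y) = (1/n)∑ᵢ ‖∇fᵢ(y)‖² − ‖∇F(y)‖²`. -/
theorem minibatch_USAM_expected_update_expansion
    {d n b : ℕ} (hn : 0 < n) (hb : 0 < b)
    (f : Fin n → EuclideanSpace ℝ (Fin d) → ℝ)
    (hf : ∀ i, ContDiff ℝ 3 (f i))
    (x : EuclideanSpace ℝ (Fin d)) (ρ M K : ℝ)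
    (hρ : 0 ≤ ρ) (hM : 0 ≤ M) (hK : 0 ≤ K)
    (hgrad : ∀ i, ∀ y ∈ Metric.closedBall x (ρ * M), ‖gradient (f i) y‖ ≤ M)
    (hD3 : ∀ i, ∀ y ∈ Metric.closedBall x (ρ * M), ‖iteratedFDeriv ℝ 3 (f i) y‖ ≤ K)
    (F : EuclideanSpace ℝ (Fin d) → ℝ)
    (hF : F = fun y => (n : ℝ)⁻¹ * ∑ i, f i y)
    (Fb : (Fin b → Fin n) → EuclideanSpace ℝ (Fin d) → ℝ)
    (hFb : ∀ γ, Fb γ = fun y => (b : ℝ)⁻¹ * ∑ j, f (γ j) y) :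
    ‖(((n : ℝ) ^ b)⁻¹ • ∑ γ : Fin b → Fin n,
          gradient (Fb γ) (x + ρ • gradient (Fb γ) x))
        - gradient F x
        - ρ • gradient (fun y =>
            (1 / 2) * ‖gradient F y‖ ^ 2
              + (1 / (2 * (b : ℝ))) *
                ((n : ℝ)⁻¹ * (∑ i, ‖gradient (f i) y‖ ^ 2) - ‖gradient F y‖ ^ 2)) x‖
      ≤ K * M ^ 2 / 2 * ρ ^ 2 := by
  have : Nonempty (Fin n) := ⟨⟨0, hn⟩⟩
  have : Nonempty (Fin b) := ⟨⟨0, hb⟩⟩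
  have hfd : ∀ i, Differentiable ℝ (f i) := fun i => (hf i).differentiable (by norm_num)
  have hF' : F = fun y => mean (fun i => f i y) := by simp [hF, mean_def]
  have hFC : ContDiff ℝ 3 F := by
    rw [hF]
    exact contDiff_const.mul (ContDiff.sum fun i _ => hf i)
  have hgF : gradient F = fun y => mean (fun i => gradient (f i) y) := by
    rw [hF', gradient_mean hfd]
  have hgFb : ∀ γ, gradient (Fb γ) = fun y => mean (fun j => gradient (f (γ j)) y) := by
    intro γ
    rw [← gradient_mean fun j => hfd (γ j)]
    simp [hFb, mean_def]
  set D := fun i => fderiv ℝ (gradient (f i)) x with hD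
  set g := fun i => gradient (f i) x with hg
  have hDF : fderiv ℝ (gradient F) x = mean D := by
    rw [hgF]
    simp only [mean_def]
    exact ((HasFDerivAt.fun_sum fun i _ =>
      ((contDiff_gradient (hf i)).differentiable (by norm_num) x).hasFDerivAt).const_smul
        (Fintype.card (Fin n) : ℝ)⁻¹).fderiv
  -- `P` and `Q` are the gradients at `x` of `½ · avg_i ‖∇f_i‖²` and of `½‖∇F‖²`.
  set P := mean (fun i => D i (g i)) with hP
  set Q := mean (fun i => mean (fun l => D i (g l))) with hQ
  have hQF : fderiv ℝ (gradient F) x (gradient F x) = Q := by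
    rw [hDF, hgF, mean_apply, hQ]
    simp only [map_mean, hg]
  have hreg : gradient (fun y => (1 / 2) * ‖gradient F y‖ ^ 2
      + (1 / (2 * (b : ℝ))) *
        ((n : ℝ)⁻¹ * (∑ i, ‖gradient (f i) y‖ ^ 2) - ‖gradient F y‖ ^ 2)) x
      = Q + (b : ℝ)⁻¹ • (P - Q) := by
    have h1 := (hasGradientAt_norm_gradient_sq hFC x).hasFDerivAt
    have h2 := HasFDerivAt.fun_sum (u := Finset.univ)
      fun i _ => (hasGradientAt_norm_gradient_sq (hf i) x).hasFDerivAt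
    have h3 := (h1.const_mul (1 / 2)).add
      (((h2.const_mul (n : ℝ)⁻¹).sub h1).const_mul (1 / (2 * (b : ℝ))))
    apply HasGradientAt.gradient
    rw [hasGradientAt_iff_hasFDerivAt]
    have hPs : P = (n : ℝ)⁻¹ • ∑ i, D i (g i) := by simp [hP, mean_def]
    refine h3.congr_fderiv ?_
    rw [hQF]
    ext w
    simp [hPs, ← Finset.mul_sum]
    ring
  have hexp : ((n : ℝ) ^ b)⁻¹ • ∑ γ : Fin b → Fin n,
        gradient (Fb γ) (x + ρ • gradient (Fb γ) x)
      = mean (fun γ : Fin b → Fin n =>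
          mean (fun j => gradient (f (γ j)) (x + ρ • gradient (Fb γ) x))) := by
    rw [mean_def]
    simp [hgFb]
  have hzero : mean (fun γ : Fin b → Fin n => mean (fun j => g (γ j))) = gradient F x := by
    have hj : ∀ j : Fin b, mean (fun γ : Fin b → Fin n => g (γ j)) = mean g :=
      fun j => mean_coord j g
    rw [mean_comm, hgF]
    simp only [hj, mean_const]
    rfl
  have hone : mean (fun γ : Fin b → Fin n =>
      mean (fun j => D (γ j) (ρ • gradient (Fb γ) x))) = ρ • (Q + (b : ℝ)⁻¹ • (P - Q)) := by
    have h := mean_mean_pair (ι := Fin b) (fun i l => D i (g l))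
    rw [Fintype.card_fin] at h
    simp only [map_smul, mean_smul', hgFb, map_mean]
    rw [show Q + (b : ℝ)⁻¹ • (P - Q) = (b : ℝ)⁻¹ • P + (1 - (b : ℝ)⁻¹) • Q by module, ← h]
  rw [hreg, hexp, ← hzero, ← hone]
  simp only [← mean_sub']
  refine norm_mean_le _ fun γ => norm_mean_le _ fun j => ?_
  have hx : x ∈ Metric.closedBall x (ρ * M) := Metric.mem_closedBall_self (by positivity)
  have hv : ‖ρ • gradient (Fb γ) x‖ ≤ ρ * M := by
    rw [norm_smul, Real.norm_of_nonneg hρ, hgFb]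
    gcongr
    exact norm_mean_le _ fun j => hgrad (γ j) x hx
  refine (gradient_taylor (hf (γ j)) hv (hD3 (γ j))).trans ?_
  calc K / 2 * ‖ρ • gradient (Fb γ) x‖ ^ 2 ≤ K / 2 * (ρ * M) ^ 2 := by gcongr
    _ = K * M ^ 2 / 2 * ρ ^ 2 := by ring
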